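/- Let (X, f_{1,∞}) be a periodic non-autonomous system on a T₃ space X with induced map g having a transitive point. If x is a transitive point and there exists y ∈ X with (x,y) not a syndetic equicontinuity pair, then (X, f_{1,∞}) is thickly Hausdorff sensitive. Consequently, a minimal such system is either syndetically topologically equicontinuous or thickly Hausdorff sensitive. -/

import Mathlib

open Topology Filter Set
open scoped Uniformity

/-- `traj f n = f_n ∘ ⋯ ∘ f_1` (and `traj f 0 = id`), i.e. `f_1^n`. -/
def traj {X : Type*} (f : ℕ → X → X) : ℕ → X → X
  | 0 => id
  | n + 1 => f (n + 1) ∘ traj f n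

/-- The family `f` is periodic with period `p`. -/
def PeriodicFam {X : Type*} (f : ℕ → X → X) (p : ℕ) : Prop :=
  ∀ n, f (n + p) = f n

/-- A set of naturals is thick: it contains arbitrarily long blocks of consecutive integers. -/
def Thick (T : Set ℕ) : Prop :=
  ∀ k : ℕ, ∃ n : ℕ, ∀ i ≤ k, n + i ∈ T

/-- A set of naturals is syndetic: it has bounded gaps. -/
def Syndetic (S : Set ℕ) : Prop :=
  ∃ M : ℕ, ∀ n : ℕ, ∃ m ∈ S, n ≤ m ∧ m ≤ n + M

/-- `x` is a transitive point of the non-autonomous system `(X, f_{1,∞})`. -/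
def TransPt {X : Type*} [TopologicalSpace X] (f : ℕ → X → X) (x : X) : Prop :=
  Dense (Set.range fun n => traj f n x)

/-- `x` is a transitive point of the autonomous system `(X, g)`. -/
def TransPtAut {X : Type*} [TopologicalSpace X] (g : X → X) (x : X) : Prop :=
  Dense (Set.range fun n => g^[n] x)

/-- `x` is an equicontinuity point of `(X, f_{1,∞})` on a uniform space. -/
def EqPt {X : Type*} [UniformSpace X] (f : ℕ → X → X) (x : X) : Prop :=
  ∀ E ∈ 𝓤 X, ∃ D ∈ 𝓤 X, ∀ y : X, (x, y) ∈ D → ∀ n : ℕ, (traj f n x, traj f n y) ∈ E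

/-- `x` is a syndetically equicontinuous point of `(X, f_{1,∞})`. -/
def SynEqPt {X : Type*} [UniformSpace X] (f : ℕ → X → X) (x : X) : Prop :=
  ∀ E ∈ 𝓤 X, ∃ U ∈ 𝓝 x,
    Syndetic {n : ℕ | ∀ x₁ ∈ U, ∀ x₂ ∈ U, (traj f n x₁, traj f n x₂) ∈ E}

/-- `x` is a syndetically equicontinuous point of the autonomous system `(X, g)`. -/
def SynEqPtAut {X : Type*} [UniformSpace X] (g : X → X) (x : X) : Prop :=
  ∀ E ∈ 𝓤 X, ∃ U ∈ 𝓝 x,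
    Syndetic {n : ℕ | ∀ x₁ ∈ U, ∀ x₂ ∈ U, (g^[n] x₁, g^[n] x₂) ∈ E}

/-- `N(U, D)` for the non-autonomous system. -/
def NSet {X : Type*} (f : ℕ → X → X) (U : Set X) (D : Set (X × X)) : Set ℕ :=
  {n : ℕ | 0 < n ∧ ∃ x ∈ U, ∃ y ∈ U, (traj f n x, traj f n y) ∉ D}

/-- `N(U, D)` for the autonomous system. -/
def NSetAut {X : Type*} (g : X → X) (U : Set X) (D : Set (X × X)) : Set ℕ :=
  {n : ℕ | 0 < n ∧ ∃ x ∈ U, ∃ y ∈ U, (g^[n] x, g^[n] y) ∉ D}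

/-- Sensitivity of `(X, f_{1,∞})`. -/
def Sensitive {X : Type*} [UniformSpace X] (f : ℕ → X → X) : Prop :=
  ∃ D ∈ 𝓤 X, ∀ U : Set X, IsOpen U → U.Nonempty → (NSet f U D).Nonempty

/-- Thick sensitivity of `(X, f_{1,∞})`. -/
def ThickSensitive {X : Type*} [UniformSpace X] (f : ℕ → X → X) : Prop :=
  ∃ D ∈ 𝓤 X, ∀ U : Set X, IsOpen U → U.Nonempty → Thick (NSet f U D)

/-- Thick sensitivity of the autonomous system `(X, g)`. -/
def ThickSensitiveAut {X : Type*} [UniformSpace X] (g : X → X) : Prop :=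
  ∃ D ∈ 𝓤 X, ∀ U : Set X, IsOpen U → U.Nonempty → Thick (NSetAut g U D)

/-- Multi-sensitivity of `(X, f_{1,∞})`. -/
def MultiSensitive {X : Type*} [UniformSpace X] (f : ℕ → X → X) : Prop :=
  ∃ D ∈ 𝓤 X, ∀ (k : ℕ) (U : Fin (k + 1) → Set X),
    (∀ i, IsOpen (U i)) → (∀ i, (U i).Nonempty) → (⋂ i, NSet f (U i) D).Nonempty

/-- Multi-sensitivity of the autonomous system `(X, g)`. -/
def MultiSensitiveAut {X : Type*} [UniformSpace X] (g : X → X) : Prop :=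
  ∃ D ∈ 𝓤 X, ∀ (k : ℕ) (U : Fin (k + 1) → Set X),
    (∀ i, IsOpen (U i)) → (∀ i, (U i).Nonempty) → (⋂ i, NSetAut g (U i) D).Nonempty

/-- Eventual sensitivity of `(X, f_{1,∞})` with a given entourage `D`. -/
def EvSensitiveWith {X : Type*} [UniformSpace X] (f : ℕ → X → X) (D : Set (X × X)) : Prop :=
  ∀ x : X, ∀ E ∈ 𝓤 X, ∃ n k : ℕ, 0 < n ∧ 0 < k ∧
    ∃ y : X, (traj f n x, y) ∈ E ∧ (traj f (n + k) x, traj f k y) ∉ D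

/-- Eventual sensitivity of `(X, f_{1,∞})`. -/
def EvSensitive {X : Type*} [UniformSpace X] (f : ℕ → X → X) : Prop :=
  ∃ D ∈ 𝓤 X, EvSensitiveWith f D

/-- Eventual sensitivity of the autonomous system `(X, g)` with entourage `D`. -/
def EvSensitiveAutWith {X : Type*} [UniformSpace X] (g : X → X) (D : Set (X × X)) : Prop :=
  ∀ x : X, ∀ E ∈ 𝓤 X, ∃ q k : ℕ, 0 < q ∧ 0 < k ∧
    ∃ y : X, (g^[q] x, y) ∈ E ∧ (g^[q + k] x, g^[k] y) ∉ D

/-- `(x, y)` is a (topological) equicontinuity pair for `(X, f_{1,∞})`. -/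
def EqPair {X : Type*} [TopologicalSpace X] (f : ℕ → X → X) (x y : X) : Prop :=
  ∀ O ∈ 𝓝 y, ∃ U ∈ 𝓝 x, ∃ V ∈ 𝓝 y, ∀ n : ℕ, 0 < n →
    ((traj f n '' U) ∩ V).Nonempty → traj f n '' U ⊆ O

/-- `(x, y)` is a syndetic equicontinuity pair for `(X, f_{1,∞})`. -/
def SynEqPair {X : Type*} [TopologicalSpace X] (f : ℕ → X → X) (x y : X) : Prop :=
  ∀ O ∈ 𝓝 y, ∃ U ∈ 𝓝 x, ∃ V ∈ 𝓝 y,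
    Syndetic {n : ℕ | ((traj f n '' U) ∩ V).Nonempty → traj f n '' U ⊆ O}

/-- `O` is a splitting neighborhood of `y` with respect to `x`. -/
def SplittingNbhd {X : Type*} [TopologicalSpace X] (f : ℕ → X → X) (x y : X) (O : Set X) :
    Prop :=
  O ∈ 𝓝 y ∧ ∀ U ∈ 𝓝 x, ∀ V ∈ 𝓝 y, ∃ n : ℕ, 0 < n ∧
    ((traj f n '' U) ∩ V).Nonempty ∧ ¬ traj f n '' U ⊆ O

/-- A finite open cover of `X`. -/
def IsFinOpenCover {X : Type*} [TopologicalSpace X] (𝒰 : Finset (Set X)) : Prop :=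
  (∀ U ∈ 𝒰, IsOpen U) ∧ ⋃₀ (↑𝒰 : Set (Set X)) = Set.univ

/-- `N(V, 𝒰)`: times at which `f_1^n(V)` is not contained in any single member of `𝒰`. -/
def HNSet {X : Type*} (f : ℕ → X → X) (V : Set X) (𝒰 : Finset (Set X)) : Set ℕ :=
  {n : ℕ | 0 < n ∧ ∀ U ∈ 𝒰, ¬ traj f n '' V ⊆ U}

/-- `N(V, 𝒰)` for the autonomous system. -/
def HNSetAut {X : Type*} (g : X → X) (V : Set X) (𝒰 : Finset (Set X)) : Set ℕ :=
  {n : ℕ | 0 < n ∧ ∀ U ∈ 𝒰, ¬ g^[n] '' V ⊆ U}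

/-- Hausdorff sensitivity of `(X, f_{1,∞})`. -/
def HSensitive {X : Type*} [TopologicalSpace X] (f : ℕ → X → X) : Prop :=
  ∃ 𝒰 : Finset (Set X), IsFinOpenCover 𝒰 ∧
    ∀ V : Set X, IsOpen V → V.Nonempty → (HNSet f V 𝒰).Nonempty

/-- Hausdorff sensitivity of the autonomous system `(X, g)`. -/
def HSensitiveAut {X : Type*} [TopologicalSpace X] (g : X → X) : Prop :=
  ∃ 𝒰 : Finset (Set X), IsFinOpenCover 𝒰 ∧
    ∀ V : Set X, IsOpen V → V.Nonempty → (HNSetAut g V 𝒰).Nonempty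

/-- Thick Hausdorff sensitivity of `(X, f_{1,∞})`. -/
def ThickHSensitive {X : Type*} [TopologicalSpace X] (f : ℕ → X → X) : Prop :=
  ∃ 𝒰 : Finset (Set X), IsFinOpenCover 𝒰 ∧
    ∀ V : Set X, IsOpen V → V.Nonempty → Thick (HNSet f V 𝒰)

/-- Thick Hausdorff sensitivity of the autonomous system `(X, g)`. -/
def ThickHSensitiveAut {X : Type*} [TopologicalSpace X] (g : X → X) : Prop :=
  ∃ 𝒰 : Finset (Set X), IsFinOpenCover 𝒰 ∧
    ∀ V : Set X, IsOpen V → V.Nonempty → Thick (HNSetAut g V 𝒰)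

/-- Multi-Hausdorff sensitivity of the autonomous system `(X, g)`. -/
def MultiHSensitiveAut {X : Type*} [TopologicalSpace X] (g : X → X) : Prop :=
  ∃ 𝒰 : Finset (Set X), IsFinOpenCover 𝒰 ∧
    ∀ (m : ℕ) (V : Fin (m + 1) → Set X),
      (∀ i, IsOpen (V i)) → (∀ i, (V i).Nonempty) → (⋂ i, HNSetAut g (V i) 𝒰).Nonempty

/-!
Write `g = traj f p`. If some singleton is not nowhere dense, the trajectory of a transitive point
`x` enters an open set of mutually inseparable points; from then on a whole neighbourhood of `x`
moves as a single point, so `(x, y)` is a syndetic equicontinuity pair for every `y`.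

Otherwise `x` is transitive for `g` as well. The orbit of `x` under `f` is the union of the images
of its `g`-orbit under `traj f i`, `i < p`, so one of these images is somewhere dense. If `z` is
transitive for `g`, the closure of this image contains some `traj f i (g^[k] z)`, and the remaining
maps `f (i + 1), …, f p` carry that point to `g^[k + 1] z`, in the closure of the `g`-orbit of `x`.
As every tail of the `g`-orbit of `z` is still dense, so is the `g`-orbit of `x`.

Let `O` witness that `(x, y)` is not a syndetic equicontinuity pair, and let `C ⊆ interior O` be a
closed neighbourhood of `y`. A nonempty open `W` contains some `g^[m] x`, so `U = g^[m] ⁻¹' W` is a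
neighbourhood of `x`. For a thick set of times `n`, `traj f n '' U` meets `C` and leaves `O`. For
such `n ≥ p * m`, `traj f n '' U ⊆ traj f (n - p * m) '' W`, so the latter lies in neither member
of the cover `{interior O, Cᶜ}`.
-/

section NowhereDense

variable {X ι : Type*} [TopologicalSpace X]

theorem dense_of_dense_union_of_isNowhereDense {s t : Set X} (hst : Dense (s ∪ t))
    (hs : IsNowhereDense s) : Dense t := by
  have hcompl : Dense (closure s)ᶜ := interior_eq_empty_iff_dense_compl.1 hs
  refine dense_closure.1 (hcompl.mono fun a ha => ?_)
  have hmem : a ∈ closure s ∪ closure t := closure_union (s := s) ▸ hst a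
  exact hmem.resolve_left ha

theorem exists_not_isNowhereDense_of_dense_biUnion [Nonempty X] {A : ι → Set X} {s : Finset ι}
    (h : Dense (⋃ i ∈ s, A i)) : ∃ i ∈ s, ¬ IsNowhereDense (A i) := by
  classical
  induction s using Finset.induction_on with
  | empty => simpa using h.nonempty
  | insert j s _ ih =>
    by_cases hj : IsNowhereDense (A j)
    · rw [Finset.set_biUnion_insert] at h
      obtain ⟨i, hi, hAi⟩ := ih (dense_of_dense_union_of_isNowhereDense h hj)
      exact ⟨i, Finset.mem_insert_of_mem hi, hAi⟩
    · exact ⟨j, Finset.mem_insert_self j s, hj⟩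

end NowhereDense

section Thick

theorem not_syndetic_iff_thick_compl {S : Set ℕ} : ¬ Syndetic S ↔ Thick Sᶜ := by
  unfold Syndetic Thick
  push Not
  refine forall_congr' fun k => exists_congr fun n => ⟨fun h i hi hmem => ?_, fun h m hm hnm => ?_⟩
  · have := h _ hmem (Nat.le_add_right n i)
    omega
  · by_contra! hmk
    obtain ⟨i, rfl⟩ := Nat.exists_eq_add_of_le hnm
    exact h i (by omega) hm

theorem Thick.mono {S T : Set ℕ} (hS : Thick S) (hST : S ⊆ T) : Thick T := fun k =>
  (hS k).imp fun _ hn i hi => hST (hn i hi)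

theorem Thick.setOf_pos_and_add_mem {T : Set ℕ} (hT : Thick T) (c : ℕ) :
    Thick {n | 0 < n ∧ n + c ∈ T} := by
  intro k
  obtain ⟨n, hn⟩ := hT (k + (c + 1))
  refine ⟨n + 1, fun i hi => ⟨by omega, ?_⟩⟩
  have hmem := hn (i + (c + 1)) (by omega)
  rwa [show n + (i + (c + 1)) = n + 1 + i + c by omega] at hmem

end Thick

section Trajectory

variable {X : Type*} {f : ℕ → X → X}

theorem continuous_traj [TopologicalSpace X] (hf : ∀ n, Continuous (f n)) (n : ℕ) :
    Continuous (traj f n) := by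
  induction n with
  | zero => exact continuous_id
  | succ n ih => exact (hf (n + 1)).comp ih

theorem traj_add (f : ℕ → X → X) (m n : ℕ) :
    traj f (m + n) = traj (fun k => f (m + k)) n ∘ traj f m := by
  induction n with
  | zero => rfl
  | succ n ih =>
    change f (m + n + 1) ∘ traj f (m + n) = _
    rw [ih]
    rfl

theorem PeriodicFam.traj_add_mul {p : ℕ} (hper : PeriodicFam f p) (n k : ℕ) :
    traj f (n + p * k) = traj f n ∘ (traj f p)^[k] := by
  have hshift : (fun j => f (p + j)) = f := funext fun j => Nat.add_comm p j ▸ hper j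
  induction k with
  | zero => rfl
  | succ k ih =>
    rw [show n + p * (k + 1) = p + (n + p * k) by ring, traj_add, hshift, ih, Function.comp_assoc,
      Function.iterate_succ]

end Trajectory

section ForwardOrbit

variable {X Y : Type*}

/-- The forward orbit `{g^[n] x | n ∈ ℕ}` of `x`, the set whose density is `TransPtAut g x`. -/
def forwardOrbit (g : X → X) (x : X) : Set X :=
  range fun n => g^[n] x

theorem forwardOrbit_eq_insert (g : X → X) (x : X) :
    forwardOrbit g x = insert x (forwardOrbit g (g x)) := by
  ext y
  constructor
  · rintro ⟨_ | n, rfl⟩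
    · exact mem_insert _ _
    · exact mem_insert_of_mem _ ⟨n, rfl⟩
  · rintro (rfl | ⟨n, rfl⟩)
    · exact ⟨0, rfl⟩
    · exact ⟨n + 1, rfl⟩

theorem mapsTo_forwardOrbit (g : X → X) (x : X) :
    MapsTo g (forwardOrbit g x) (forwardOrbit g x) := by
  rintro _ ⟨n, rfl⟩
  exact ⟨n + 1, Function.iterate_succ_apply' g n x⟩

variable [TopologicalSpace X] [TopologicalSpace Y]

theorem TransPtAut.iterate {g : X → X} {z : X} (hz : TransPtAut g z)
    (hX : ∀ w : X, IsNowhereDense {w}) (k : ℕ) : TransPtAut g (g^[k] z) := by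
  induction k generalizing z with
  | zero => exact hz
  | succ _ ih =>
    have hdense : Dense ({z} ∪ forwardOrbit g (g z)) := by
      rwa [← insert_eq, ← forwardOrbit_eq_insert]
    exact ih (dense_of_dense_union_of_isNowhereDense hdense (hX z))

theorem TransPtAut.of_mem_closure_forwardOrbit {g : X → X} (hg : Continuous g) {x z : X}
    (hz : TransPtAut g z) (hzx : z ∈ closure (forwardOrbit g x)) : TransPtAut g x := by
  have hinv : MapsTo g (closure (forwardOrbit g x)) (closure (forwardOrbit g x)) :=
    (mapsTo_forwardOrbit g x).closure hg
  refine dense_closure.1 (hz.mono ?_)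
  rintro _ ⟨n, rfl⟩
  exact hinv.iterate n hzx

theorem TransPtAut.exists_iterate_mem_closure_forwardOrbit {t : X → Y} {h : Y → X}
    (ht : Continuous t) (hh : Continuous h) {x z : X} (hz : TransPtAut (h ∘ t) z)
    (hx : ¬ IsNowhereDense (t '' forwardOrbit (h ∘ t) x)) :
    ∃ k, (h ∘ t)^[k] z ∈ closure (forwardOrbit (h ∘ t) x) := by
  set A := t '' forwardOrbit (h ∘ t) x
  obtain ⟨a, ha⟩ : (interior (closure A)).Nonempty := nonempty_iff_ne_empty.2 hx
  have hA : closure A ⊆ closure (t '' forwardOrbit (h ∘ t) z) :=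
    closure_minimal ((image_subset_range t _).trans (ht.range_subset_closure_image_dense hz))
      isClosed_closure
  obtain ⟨_, hmem, _, ⟨k, rfl⟩, rfl⟩ :=
    mem_closure_iff.1 (hA (interior_subset ha)) _ isOpen_interior ha
  have hmaps : MapsTo h A (forwardOrbit (h ∘ t) x) := by
    rintro _ ⟨u, hu, rfl⟩
    exact mapsTo_forwardOrbit (h ∘ t) x hu
  refine ⟨k + 1, ?_⟩
  rw [Function.iterate_succ_apply', Function.comp_apply]
  exact map_mem_closure hh (interior_subset hmem) hmaps

end ForwardOrbit

section PeriodicSystem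

variable {X : Type*} [TopologicalSpace X] {f : ℕ → X → X} {x y z : X} {p : ℕ}

theorem TransPt.exists_lt_not_isNowhereDense (hx : TransPt f x) (hp : 0 < p)
    (hper : PeriodicFam f p) :
    ∃ i < p, ¬ IsNowhereDense (traj f i '' forwardOrbit (traj f p) x) := by
  have hcover : (range fun n => traj f n x) ⊆
      ⋃ i ∈ Finset.range p, traj f i '' forwardOrbit (traj f p) x := by
    rintro _ ⟨n, rfl⟩
    refine mem_iUnion₂.2 ⟨n % p, Finset.mem_range.2 (n.mod_lt hp), _, ⟨n / p, rfl⟩, ?_⟩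
    rw [← Function.comp_apply (f := traj f (n % p)), ← hper.traj_add_mul, Nat.mod_add_div]
  have : Nonempty X := ⟨x⟩
  simpa only [Finset.mem_range] using
    exists_not_isNowhereDense_of_dense_biUnion (hx.mono hcover)

theorem TransPt.transPtAut (hf : ∀ n, Continuous (f n)) (hp : 0 < p) (hper : PeriodicFam f p)
    (hX : ∀ w : X, IsNowhereDense {w}) (hz : TransPtAut (traj f p) z) (hx : TransPt f x) :
    TransPtAut (traj f p) x := by
  obtain ⟨i, hip, hi⟩ := hx.exists_lt_not_isNowhereDense hp hper
  have hfactor : traj f p = traj (fun k => f (i + k)) (p - i) ∘ traj f i := by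
    rw [← traj_add, Nat.add_sub_cancel' hip.le]
  obtain ⟨k, hk⟩ : ∃ k, (traj f p)^[k] z ∈ closure (forwardOrbit (traj f p) x) := by
    rw [hfactor] at hz hi ⊢
    exact hz.exists_iterate_mem_closure_forwardOrbit (continuous_traj hf i)
      (continuous_traj (fun k => hf (i + k)) (p - i)) hi
  exact (hz.iterate hX k).of_mem_closure_forwardOrbit (continuous_traj hf p) hk

theorem TransPt.synEqPair_of_not_isNowhereDense_singleton [R0Space X]
    (hf : ∀ n, Continuous (f n)) {w : X} (hw : ¬ IsNowhereDense {w}) (hx : TransPt f x) (y : X) :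
    SynEqPair f x y := by
  intro O hO
  set W := interior (closure {w})
  obtain ⟨_, hm, m, rfl⟩ := hx.inter_open_nonempty W isOpen_interior (nonempty_iff_ne_empty.2 hw)
  have hinsep : ∀ a ∈ W, Inseparable w a := fun a ha =>
    (specializes_iff_mem_closure.2 (interior_subset ha)).inseparable
  have htraj : ∀ n, ∀ u ∈ traj f m ⁻¹' W, ∀ v ∈ traj f m ⁻¹' W,
      Inseparable (traj f (m + n) u) (traj f (m + n) v) := by
    intro n u hu v hv
    rw [traj_add]
    exact ((hinsep _ hu).symm.trans (hinsep _ hv)).map (continuous_traj (fun k => hf (m + k)) n)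
  refine ⟨traj f m ⁻¹' W, (isOpen_interior.preimage (continuous_traj hf m)).mem_nhds hm,
    interior O, interior_mem_nhds.2 hO, m, fun n => ⟨m + n, ?_, by omega, by omega⟩⟩
  rintro ⟨_, ⟨u, hu, rfl⟩, huO⟩ _ ⟨v, hv, rfl⟩
  exact interior_subset (((htraj n u hu v hv).mem_open_iff isOpen_interior).1 huO)

theorem not_synEqPair_iff_exists_thick : ¬ SynEqPair f x y ↔
    ∃ O ∈ 𝓝 y, ∀ U ∈ 𝓝 x, ∀ V ∈ 𝓝 y,
      Thick {n | (traj f n '' U ∩ V).Nonempty ∧ ¬ traj f n '' U ⊆ O} := by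
  unfold SynEqPair
  push Not
  simp only [not_syndetic_iff_thick_compl, compl_ofPred, Classical.not_imp]

theorem isFinOpenCover_pair [DecidableEq (Set X)] {U V : Set X} (hU : IsOpen U) (hV : IsOpen V)
    (hUV : U ∪ V = univ) : IsFinOpenCover {U, V} := by
  refine ⟨?_, ?_⟩
  · simp [hU, hV]
  · simpa using hUV

theorem thickHSensitive_of_transPtAut [RegularSpace X] (hf : ∀ n, Continuous (f n))
    (hper : PeriodicFam f p) (hx : TransPtAut (traj f p) x) (hxy : ¬ SynEqPair f x y) :
    ThickHSensitive f := by
  classical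
  obtain ⟨O, hO, hthick⟩ := not_synEqPair_iff_exists_thick.1 hxy
  obtain ⟨C, hC, hCclosed, hCO⟩ := exists_mem_nhds_isClosed_subset (interior_mem_nhds.2 hO)
  have hcover : interior O ∪ Cᶜ = univ :=
    univ_subset_iff.1 ((union_compl_self C).symm.subset.trans (union_subset_union_left _ hCO))
  refine ⟨{interior O, Cᶜ}, isFinOpenCover_pair isOpen_interior hCclosed.isOpen_compl hcover, ?_⟩
  intro W hW hWne
  obtain ⟨_, hm, m, rfl⟩ := hx.inter_open_nonempty W hW hWne
  set U := (traj f p)^[m] ⁻¹' W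
  have hU : U ∈ 𝓝 x := (hW.preimage ((continuous_traj hf p).iterate m)).mem_nhds hm
  refine ((hthick U hU C hC).setOf_pos_and_add_mem (p * m)).mono ?_
  rintro n ⟨hn, hmeet, hleave⟩
  have himage : traj f (n + p * m) '' U ⊆ traj f n '' W := by
    rw [hper.traj_add_mul, image_comp]
    exact image_mono (image_preimage_subset _ _)
  refine ⟨hn, fun S hS hsub => ?_⟩
  obtain rfl | rfl : S = interior O ∨ S = Cᶜ := by simpa using hS
  · exact hleave (himage.trans (hsub.trans interior_subset))
  · obtain ⟨a, ha, haC⟩ := hmeet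
    exact hsub (himage ha) haC

theorem TransPt.thickHSensitive_of_not_synEqPair [RegularSpace X] (hf : ∀ n, Continuous (f n))
    (hp : 0 < p) (hper : PeriodicFam f p) (hz : TransPtAut (traj f p) z) (hx : TransPt f x)
    (hxy : ¬ SynEqPair f x y) : ThickHSensitive f := by
  have hX : ∀ w : X, IsNowhereDense {w} := fun w => by
    by_contra hw
    exact hxy (hx.synEqPair_of_not_isNowhereDense_singleton hf hw y)
  exact thickHSensitive_of_transPtAut hf hper (hx.transPtAut hf hp hper hX hz) hxy

end PeriodicSystem

theorem thickHSensitive_or_synTopEq_general {X : Type*} [TopologicalSpace X] [RegularSpace X]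
    (f : ℕ → X → X) (hf : ∀ n, Continuous (f n))
    (p : ℕ) (hp : 0 < p) (hper : PeriodicFam f p)
    (htrans : ∃ x, TransPtAut (traj f p) x) :
    (∀ x : X, TransPt f x → (∃ y : X, ¬ SynEqPair f x y) → ThickHSensitive f) ∧
    ((∀ x : X, TransPt f x) → (∀ x y : X, SynEqPair f x y) ∨ ThickHSensitive f) := by
  obtain ⟨z, hz⟩ := htrans
  have hsens : ∀ x : X, TransPt f x → (∃ y : X, ¬ SynEqPair f x y) → ThickHSensitive f :=
    fun x hx ⟨_, hxy⟩ => hx.thickHSensitive_of_not_synEqPair hf hp hper hz hxy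
  refine ⟨hsens, fun hmin => or_iff_not_imp_left.2 fun hnot => ?_⟩
  obtain ⟨x, hx⟩ := not_forall.1 hnot
  exact hsens x (hmin x) (not_forall.1 hx)

theorem thickHSensitive_or_synTopEq {X : Type*} [TopologicalSpace X] [T3Space X]
    (f : ℕ → X → X) (hf : ∀ n, Continuous (f n))
    (p : ℕ) (hp : 0 < p) (hper : PeriodicFam f p)
    (htrans : ∃ x, TransPtAut (traj f p) x) :
    (∀ x : X, TransPt f x → (∃ y : X, ¬ SynEqPair f x y) → ThickHSensitive f) ∧
    ((∀ x : X, TransPt f x) → (∀ x y : X, SynEqPair f x y) ∨ ThickHSensitive f) :=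
  thickHSensitive_or_synTopEq_general f hf p hp hper htrans
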